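/- In any lattice L with a strictly isotone and submodular function r : L → ℝ, the function d'(x, y) := r(x ⊔ y) − min(r(x), r(y)) is a metric on L. -/

import Mathlib

/-!
Submodularity at `x ⊔ t` and `t ⊔ y`, whose join dominates `x ⊔ y` and which have `t` as a common
lower bound, gives `r (x ⊔ y) + r t ≤ r (x ⊔ t) + r (t ⊔ y)`. The triangle inequality follows by
subtracting `r x ⊓ r t + r t ⊓ r y ≤ r t + r x ⊓ r y`. Points are separated because
`r (x ⊔ y) = r x ⊓ r y` prevents `x ⊔ y` from lying strictly above `x` or `y`.
-/

section Submodular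

variable {L G : Type*} [Add G] [Preorder G] {r : L → G}

theorem map_sup_add_map_le_of_submodular [AddLeftMono G] [Lattice L] (hr : Monotone r)
    (hsub : ∀ x y : L, r (x ⊔ y) + r (x ⊓ y) ≤ r x + r y) {x y z : L} (hx : z ≤ x) (hy : z ≤ y) :
    r (x ⊔ y) + r z ≤ r x + r y :=
  calc
    r (x ⊔ y) + r z ≤ r (x ⊔ y) + r (x ⊓ y) := by gcongr; exact hr (le_inf hx hy)
    _ ≤ r x + r y := hsub x y

theorem map_sup_add_map_le_map_sup_add_map_sup [AddRightMono G] [SemilatticeSup L]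
    (hr : Monotone r) (hsub : ∀ x y z : L, z ≤ x → z ≤ y → r (x ⊔ y) + r z ≤ r x + r y)
    (x t y : L) :
    r (x ⊔ y) + r t ≤ r (x ⊔ t) + r (t ⊔ y) :=
  calc
    r (x ⊔ y) + r t ≤ r ((x ⊔ t) ⊔ (t ⊔ y)) + r t := by
      gcongr; exact hr (sup_le_sup le_sup_left le_sup_right)
    _ ≤ r (x ⊔ t) + r (t ⊔ y) := hsub _ _ _ le_sup_right le_sup_left

end Submodular

theorem le_of_map_sup_le_map_left {L G : Type*} [SemilatticeSup L] [Preorder G] {r : L → G}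
    (hr : StrictMono r) {x y : L} (h : r (x ⊔ y) ≤ r x) : y ≤ x :=
  sup_eq_left.1 (eq_of_le_of_not_lt le_sup_left fun hlt => (hr hlt).not_ge h).symm

theorem inf_add_inf_le_add_inf {G : Type*} [AddCommGroup G] [Lattice G] [IsOrderedAddMonoid G]
    (a t b : G) : a ⊓ t + t ⊓ b ≤ t + a ⊓ b := by
  have ha : a ⊓ t + t ⊓ b ≤ t + a :=
    (add_le_add inf_le_left inf_le_left).trans_eq (add_comm a t)
  have hb : a ⊓ t + t ⊓ b ≤ t + b := add_le_add inf_le_right inf_le_right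
  exact (le_inf ha hb).trans_eq (add_inf a b t).symm

/-- The distance `d'(x, y) = r (x ⊔ y) - r x ⊓ r y` attached to a function `r` on a
join-semilattice. The values of `r` lie in a lattice-ordered group; for real values `⊓` is `min`. -/
def supDist {L G : Type*} [SemilatticeSup L] [AddCommGroup G] [Lattice G] (r : L → G)
    (x y : L) : G :=
  r (x ⊔ y) - r x ⊓ r y

section SupDist

variable {L G : Type*} [SemilatticeSup L] [AddCommGroup G] [Lattice G] {r : L → G}

theorem supDist_comm (r : L → G) (x y : L) : supDist r x y = supDist r y x := by
  simp only [supDist, sup_comm, inf_comm]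

theorem supDist_self (r : L → G) (x : L) : supDist r x x = 0 := by
  simp only [supDist, sup_idem, inf_idem, sub_self]

theorem supDist_eq_zero (hr : StrictMono r) {x y : L} : supDist r x y = 0 ↔ x = y := by
  refine ⟨fun h => ?_, fun h => h ▸ supDist_self r x⟩
  have hxy : r (x ⊔ y) = r x ⊓ r y := sub_eq_zero.1 h
  have hyx : y ≤ x := le_of_map_sup_le_map_left hr (hxy.trans_le inf_le_left)
  have hle : x ≤ y := le_of_map_sup_le_map_left hr (by
    rw [sup_comm, hxy]
    exact inf_le_right)
  exact hle.antisymm hyx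

variable [IsOrderedAddMonoid G]

theorem supDist_nonneg (hr : Monotone r) (x y : L) : 0 ≤ supDist r x y :=
  sub_nonneg.2 (inf_le_left.trans (hr le_sup_left))

theorem supDist_triangle {x t y : L} (h : r (x ⊔ y) + r t ≤ r (x ⊔ t) + r (t ⊔ y)) :
    supDist r x y ≤ supDist r x t + supDist r t y :=
  calc
    supDist r x y = (r (x ⊔ y) + r t) - (r t + r x ⊓ r y) := by unfold supDist; abel
    _ ≤ (r (x ⊔ t) + r (t ⊔ y)) - (r x ⊓ r t + r t ⊓ r y) :=
      sub_le_sub h (inf_add_inf_le_add_inf _ _ _)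
    _ = supDist r x t + supDist r t y := by unfold supDist; abel

theorem matroid_lattice_metric'_general (hr : StrictMono r)
    (hsub : ∀ x y z : L, z ≤ x → z ≤ y → r (x ⊔ y) + r z ≤ r x + r y) :
    (∀ x y : L, 0 ≤ supDist r x y) ∧
    (∀ x y : L, supDist r x y = 0 ↔ x = y) ∧
    (∀ x y : L, supDist r x y = supDist r y x) ∧
    (∀ x t y : L, supDist r x y ≤ supDist r x t + supDist r t y) :=
  ⟨supDist_nonneg hr.monotone, fun _ _ => supDist_eq_zero hr, supDist_comm r, fun x t y =>
    supDist_triangle (map_sup_add_map_le_map_sup_add_map_sup hr.monotone hsub x t y)⟩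

end SupDist

/-- In any lattice `L` with a strictly isotone and submodular function `r : L → ℝ`,
`d'(x, y) := r(x ⊔ y) − min (r x) (r y)` is a metric. -/
theorem matroid_lattice_metric' {L : Type*} [Lattice L] (r : L → ℝ)
    (hmono : ∀ x y : L, x < y → r x < r y)
    (hsub : ∀ x y : L, r (x ⊔ y) + r (x ⊓ y) ≤ r x + r y) :
    (∀ x y : L, 0 ≤ r (x ⊔ y) - min (r x) (r y)) ∧
    (∀ x y : L, r (x ⊔ y) - min (r x) (r y) = 0 ↔ x = y) ∧
    (∀ x y : L, r (x ⊔ y) - min (r x) (r y) = r (y ⊔ x) - min (r y) (r x)) ∧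
    (∀ x t y : L, r (x ⊔ y) - min (r x) (r y) ≤
      (r (x ⊔ t) - min (r x) (r t)) + (r (t ⊔ y) - min (r t) (r y))) :=
  have hr : StrictMono r := fun x y => hmono x y
  matroid_lattice_metric'_general hr fun _ _ _ =>
    map_sup_add_map_le_of_submodular hr.monotone hsub
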